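/- Let B, B', B'' be real constants with B > 0, B' < 0, B'' > 0, BB'' − B'² > 0, and let μ > √(4B''). Define ψ(ρ,u,y) = Ψ*(y) − (u − μρ²/2)²/(2B) + μ²ρ²/(4B') + log ρ − (BB''/(BB''−B'²))·(y + (μ + (2B'/B)(u − μρ²/2))/√(8B''))², where Ψ* is the logarithmic potential of the semicircle law of radius √2. Then ψ attains its unique maximum on (0,∞) × ℝ × ℝ at ρ* = √(−2B')/μ, u* = B'/μ, y* = −(1/√2)(μ/√(4B'') + √(4B'')/μ), and ψ(ρ*,u*,y*) = −log√(4B'') + (1/2)log(−2B') − 1/2 − (1/2)log 2. -/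

import Mathlib

open MeasureTheory

/-- The semicircle probability measure of radius `√2`. -/
noncomputable def sigmaSc : Measure ℝ :=
  (volume.restrict (Set.Icc (-Real.sqrt 2) (Real.sqrt 2))).withDensity
    (fun t => ENNReal.ofReal ((1 / Real.pi) * Real.sqrt (2 - t ^ 2)))

/-- The logarithmic potential of the semicircle law. -/
noncomputable def PsiStar (x : ℝ) : ℝ := ∫ t, Real.log |x - t| ∂sigmaSc

/-- The SRC complexity function `ψ(ρ,u,y)`. -/
noncomputable def psiSRC (B B' B'' μ ρ u y : ℝ) : ℝ :=
  PsiStar y - (u - μ * ρ ^ 2 / 2) ^ 2 / (2 * B) + μ ^ 2 * ρ ^ 2 / (4 * B') +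
    Real.log ρ -
    (B * B'' / (B * B'' - B' ^ 2)) *
      (y + (μ + (2 * B' / B) * (u - μ * ρ ^ 2 / 2)) / Real.sqrt (8 * B'')) ^ 2

lemma dens_meas : Measurable (fun t : ℝ => ENNReal.ofReal ((1 / Real.pi) * Real.sqrt (2 - t ^ 2))) := by
  fun_prop

lemma sigma_conv (f : ℝ → ℝ) : ∫ t, f t ∂sigmaSc =
    ∫ t in (-Real.sqrt 2)..(Real.sqrt 2), (1 / Real.pi) * Real.sqrt (2 - t ^ 2) * f t := by
  unfold sigmaSc
  rw [integral_withDensity_eq_integral_toReal_smul dens_meas (by simp),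
    integral_Icc_eq_integral_Ioc,
    intervalIntegral.integral_of_le (by linarith [Real.sqrt_nonneg 2])]
  congr 1
  ext t
  rw [ENNReal.toReal_ofReal (by positivity), smul_eq_mul]

lemma sigma_trig (f : ℝ → ℝ) (hf : ContinuousOn f (Set.Icc (-Real.sqrt 2) (Real.sqrt 2))) :
    ∫ t, f t ∂sigmaSc = ∫ θ in (0 : ℝ)..Real.pi,
      (1 / Real.pi) * ((1 - Real.cos (2 * θ)) * f (Real.sqrt 2 * Real.cos θ)) := by
  rw [sigma_conv]
  have h2 : (0:ℝ) < Real.sqrt 2 := by positivity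
  have key := intervalIntegral.integral_comp_mul_deriv'' (a := 0) (b := Real.pi)
    (f := fun θ => Real.sqrt 2 * Real.cos θ) (f' := fun θ => - (Real.sqrt 2 * Real.sin θ))
    (g := fun t => (1 / Real.pi) * Real.sqrt (2 - t ^ 2) * f t) (by fun_prop)
    (fun x _ => by
      have := ((Real.hasDerivAt_cos x).const_mul (Real.sqrt 2)).hasDerivWithinAt (s := Set.Ioi x)
      simpa using this) (by fun_prop)
    (by
      apply ContinuousOn.mul (by fun_prop)
      apply hf.mono
      rintro _ ⟨θ, _, rfl⟩
      constructor
      · nlinarith [Real.neg_one_le_cos θ]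
      · nlinarith [Real.cos_le_one θ])
  simp only [Real.cos_zero, Real.cos_pi, mul_one, mul_neg] at key
  rw [intervalIntegral.integral_symm, ← key, ← intervalIntegral.integral_neg]
  apply intervalIntegral.integral_congr
  intro θ hθ
  rw [Set.uIcc_of_le Real.pi_pos.le] at hθ
  have hs := Real.sin_nonneg_of_mem_Icc hθ
  have h3 : Real.sqrt (2 - (Real.sqrt 2 * Real.cos θ)^2) = Real.sqrt 2 * Real.sin θ := by
    rw [← Real.sqrt_sq (by positivity : 0 ≤ Real.sqrt 2 * Real.sin θ)]
    congr 1
    rw [mul_pow, mul_pow, Real.sq_sqrt (by norm_num), Real.sin_sq]; ring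
  simp only [Function.comp]
  rw [h3, Real.cos_two_mul]
  have : Real.sqrt 2 * Real.sin θ * (Real.sqrt 2 * Real.sin θ) = 2 - 2 * Real.cos θ ^2 := by
    rw [mul_mul_mul_comm, Real.mul_self_sqrt (by norm_num), ← sq, Real.sin_sq]; ring
  linear_combination (1/Real.pi * f (Real.sqrt 2 * Real.cos θ)) * this

lemma int_cos (k : ℤ) (hk : k ≠ 0) : ∫ θ in (0:ℝ)..Real.pi, Real.cos (k * θ) = 0 := by
  have hk' : (k:ℝ) ≠ 0 := by exact_mod_cast hk
  rw [intervalIntegral.integral_comp_mul_left (fun x => Real.cos x) hk']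
  simp [Real.sin_int_mul_pi]

lemma int_term (n : ℕ) (hn : n ≠ 0) : ∫ θ in (0:ℝ)..Real.pi, (1 - Real.cos (2 * θ)) * (2 * Real.cos (n * θ))
    = if n = 2 then -Real.pi else 0 := by
  have e : ∀ θ : ℝ, (1 - Real.cos (2 * θ)) * (2 * Real.cos (n * θ)) =
      2 * Real.cos (((n:ℤ):ℝ) * θ) - Real.cos (((n+2:ℤ):ℝ) * θ) - Real.cos (((n-2:ℤ):ℝ) * θ) := by
    intro θ
    push_cast
    rw [add_mul (n:ℝ) 2 θ, sub_mul (n:ℝ) 2 θ, Real.cos_add, Real.cos_sub]; ring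
  simp_rw [e]
  rw [intervalIntegral.integral_sub, intervalIntegral.integral_sub, intervalIntegral.integral_const_mul,
    int_cos _ (by omega), int_cos _ (by omega)]
  · split_ifs with h
    · subst h; simp
    · rw [int_cos _ (by omega)]; simp
  all_goals exact Continuous.intervalIntegrable (by fun_prop) _ _

lemma log_one_sub (z : ℂ) (hz : ‖z‖ < 1) :
    HasSum (fun n : ℕ => -((z ^ n / n).re)) (Real.log ‖1 - z‖) := by
  have := Complex.hasSum_re (Complex.hasSum_taylorSeries_neg_log hz)
  have h2 := this.neg
  rw [Complex.neg_re, Complex.log_re, neg_neg] at h2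
  exact h2

lemma pair_sum (w : ℂ) (hw : ‖w‖ < 1) (θ : ℝ) :
    HasSum (fun n : ℕ => -((w ^ n / n).re) * ((1 - Real.cos (2 * θ)) * (2 * Real.cos (n * θ))))
      ((1 - Real.cos (2 * θ)) * (Real.log ‖1 - w * Complex.exp (θ * Complex.I)‖
        + Real.log ‖1 - w * Complex.exp (-θ * Complex.I)‖)) := by
  have n1 : ‖w * Complex.exp (θ * Complex.I)‖ < 1 := by
    rw [norm_mul, Complex.norm_exp_ofReal_mul_I, mul_one]; exact hw
  have n2 : ‖w * Complex.exp (-θ * Complex.I)‖ < 1 := by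
    have := Complex.norm_exp_ofReal_mul_I (-θ)
    push_cast at this
    rw [norm_mul, this, mul_one]; exact hw
  refine (((log_one_sub _ n1).add (log_one_sub _ n2)).mul_left (1 - Real.cos (2 * θ))).congr_fun ?_ 
  intro n
  have : ((w * Complex.exp (θ * Complex.I))^n / n) + ((w * Complex.exp (-θ * Complex.I))^n / n)
      = (w^n / n) * ((2 * Real.cos (n * θ) : ℝ) : ℂ) := by
    rw [mul_pow, mul_pow, ← Complex.exp_nat_mul, ← Complex.exp_nat_mul]
    push_cast
    rw [Complex.two_cos]
    ring_nf
  have h2 := congrArg Complex.re this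
  rw [Complex.re_mul_ofReal, Complex.add_re] at h2
  linear_combination (1 - Real.cos (2 * θ)) * h2

lemma int_pair (w : ℂ) (hw : ‖w‖ < 1) : ∫ θ in (0:ℝ)..Real.pi,
      ((1 - Real.cos (2 * θ)) * (Real.log ‖1 - w * Complex.exp (θ * Complex.I)‖
        + Real.log ‖1 - w * Complex.exp (-θ * Complex.I)‖)) = Real.pi * (w^2 / 2).re := by
  have hb : ∀ n : ℕ, |(w ^ n / n).re| ≤ ‖w‖^n := by
    intro n
    refine (Complex.abs_re_le_norm _).trans ?_
    rw [norm_div, norm_pow]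
    rcases Nat.eq_zero_or_pos n with h | h
    · subst h; simp
    · apply div_le_self (by positivity)
      simp; omega
  have := intervalIntegral.hasSum_intervalIntegral_of_summable_norm (a := 0) (b := Real.pi)
    (f := fun n : ℕ => (⟨fun θ => -((w ^ n / n).re) * ((1 - Real.cos (2 * θ)) * (2 * Real.cos (n * θ))), by fun_prop⟩ : C(ℝ, ℝ)))
    (by
      refine Summable.of_nonneg_of_le (fun _ => norm_nonneg _) (fun n => ?_)
        ((summable_geometric_of_lt_one (norm_nonneg w) hw).mul_right 4)
      rw [ContinuousMap.norm_le _ (by positivity)]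
      intro x
      simp only [ContinuousMap.restrict_apply, ContinuousMap.coe_mk, norm_mul, norm_neg, Real.norm_eq_abs]
      gcongr
      · exact hb n
      · have h1 : |1 - Real.cos (2 * x)| ≤ 2 := by
          rw [abs_le]; constructor <;> linarith [Real.neg_one_le_cos (2 * x), Real.cos_le_one (2*x)]
        have h2 : |(2:ℝ)| * |Real.cos (n * x)| ≤ 2 := by
          rw [abs_of_pos (by norm_num : (0:ℝ) < 2)]; linarith [Real.abs_cos_le_one (n * x)]
        nlinarith [abs_nonneg (1 - Real.cos (2 * x)), abs_nonneg (Real.cos (n * x))])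
  simp only [ContinuousMap.coe_mk, intervalIntegral.integral_const_mul] at this
  have e : (fun θ : ℝ => ((1 - Real.cos (2 * θ)) * (Real.log ‖1 - w * Complex.exp (θ * Complex.I)‖
        + Real.log ‖1 - w * Complex.exp (-θ * Complex.I)‖))) = fun θ : ℝ => ∑' n : ℕ, -((w ^ n / n).re) * ((1 - Real.cos (2 * θ)) * (2 * Real.cos (n * θ))) := by
    ext θ
    exact (pair_sum w hw θ).tsum_eq.symm
  rw [e]
  refine this.unique ?_
  convert hasSum_single (2:ℕ) ?_ using 1
  · rw [int_term 2 (by norm_num)]; simp; ring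
  · intro n hn
    rcases Nat.eq_zero_or_pos n with h | h
    · subst h; simp
    · rw [int_term n (by omega), if_neg hn, mul_zero]

noncomputable def jouk (ζ : ℂ) : ℂ := (ζ + ζ⁻¹) / (Real.sqrt 2 : ℂ)

lemma jouk_sub (ζ : ℂ) (hζ : ζ ≠ 0) (θ : ℝ) :
    jouk ζ - ((Real.sqrt 2 * Real.cos θ : ℝ) : ℂ) =
      (ζ / (Real.sqrt 2 : ℂ)) * ((1 - ζ⁻¹ * Complex.exp (θ * Complex.I)) *
        (1 - ζ⁻¹ * Complex.exp (-θ * Complex.I))) := by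
  have h2 : (Real.sqrt 2 : ℂ) ≠ 0 := by
    exact_mod_cast (by positivity : Real.sqrt 2 ≠ 0)
  have h3 : (Real.sqrt 2 : ℂ) ^ 2 = 2 := by
    exact_mod_cast Real.sq_sqrt (by norm_num : (0:ℝ) ≤ 2)
  have h4 : Complex.exp (θ * Complex.I) * Complex.exp (-θ * Complex.I) = 1 := by
    rw [← Complex.exp_add]; simp
  have h5 := Complex.two_cos (θ : ℂ)
  unfold jouk
  push_cast
  field_simp
  simp only [neg_mul] at h4 h5 ⊢
  linear_combination (-ζ * Complex.cos θ) * h3 - ζ * h5 - h4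

lemma one_sub_ne (ζ : ℂ) (hζ : 1 < ‖ζ‖) (θ : ℝ) : 1 - ζ⁻¹ * Complex.exp (θ * Complex.I) ≠ 0 := by
  intro h
  have h1 := congrArg norm (sub_eq_zero.mp h)
  rw [norm_mul, Complex.norm_exp_ofReal_mul_I, norm_inv, norm_one, mul_one] at h1
  have := inv_lt_one_of_one_lt₀ hζ
  linarith

lemma jouk_ne (ζ : ℂ) (hζ : 1 < ‖ζ‖) (t : ℝ) (ht : t ∈ Set.Icc (-Real.sqrt 2) (Real.sqrt 2)) :
    jouk ζ - (t : ℂ) ≠ 0 := by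
  have h2 : (0:ℝ) < Real.sqrt 2 := by positivity
  have e : t = Real.sqrt 2 * Real.cos (Real.arccos (t / Real.sqrt 2)) := by
    rw [Real.cos_arccos]
    · field_simp
    · rw [le_div_iff₀ h2]; linarith [ht.1]
    · rw [div_le_iff₀ h2]; linarith [ht.2]
  have h0 : ζ ≠ 0 := by
    intro h; rw [h, norm_zero] at hζ; linarith
  rw [e, jouk_sub ζ h0]
  have a1 := one_sub_ne ζ hζ (Real.arccos (t / Real.sqrt 2))
  have a2 := one_sub_ne ζ hζ (-Real.arccos (t / Real.sqrt 2))
  push_cast at a2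
  have h2' : (Real.sqrt 2 : ℂ) ≠ 0 := by
    exact_mod_cast h2.ne'
  exact mul_ne_zero (div_ne_zero h0 h2') (mul_ne_zero a1 a2)

lemma jouk_cont (ζ : ℂ) (hζ : 1 < ‖ζ‖) :
    ContinuousOn (fun t : ℝ => Real.log ‖jouk ζ - (t : ℂ)‖) (Set.Icc (-Real.sqrt 2) (Real.sqrt 2)) := by
  apply ContinuousOn.log
  · fun_prop
  · intro t ht
    exact norm_ne_zero_iff.mpr (jouk_ne ζ hζ t ht)

lemma jouk_int (ζ : ℂ) (hζ : 1 < ‖ζ‖) :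
    ∫ t, Real.log ‖jouk ζ - (t : ℂ)‖ ∂sigmaSc =
      (ζ⁻¹ ^ 2 / 2).re + Real.log ‖ζ‖ - Real.log 2 / 2 := by
  have h0 : ζ ≠ 0 := by
    intro h; rw [h, norm_zero] at hζ; linarith
  have h2' : (Real.sqrt 2 : ℂ) ≠ 0 := by
    exact_mod_cast (by positivity : Real.sqrt 2 ≠ 0)
  have hw : ‖ζ⁻¹‖ < 1 := by rw [norm_inv]; exact inv_lt_one_of_one_lt₀ hζ
  rw [sigma_trig _ (jouk_cont ζ hζ), intervalIntegral.integral_const_mul]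
  have e : ∀ θ : ℝ, (1 - Real.cos (2 * θ)) *
        Real.log ‖jouk ζ - ((Real.sqrt 2 * Real.cos θ : ℝ) : ℂ)‖ =
      (Real.log ‖ζ‖ - Real.log 2 / 2) * (1 - Real.cos (2 * θ)) +
       (1 - Real.cos (2 * θ)) * (Real.log ‖1 - ζ⁻¹ * Complex.exp (θ * Complex.I)‖
        + Real.log ‖1 - ζ⁻¹ * Complex.exp (-θ * Complex.I)‖) := by
    intro θ
    have a1 := one_sub_ne ζ hζ θ
    have a2 := one_sub_ne ζ hζ (-θ)
    push_cast at a2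
    rw [jouk_sub ζ h0, norm_mul, norm_mul, norm_div, Real.log_mul, Real.log_mul, Real.log_div,
      Complex.norm_real, Real.norm_of_nonneg (Real.sqrt_nonneg 2), Real.log_sqrt (by norm_num)]
    · ring
    · exact norm_ne_zero_iff.mpr h0
    · exact norm_ne_zero_iff.mpr h2'
    · exact norm_ne_zero_iff.mpr a1
    · exact norm_ne_zero_iff.mpr a2
    · exact div_ne_zero (norm_ne_zero_iff.mpr h0) (norm_ne_zero_iff.mpr h2')
    · exact mul_ne_zero (norm_ne_zero_iff.mpr a1) (norm_ne_zero_iff.mpr a2)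
  simp_rw [e]
  rw [intervalIntegral.integral_add, int_pair _ hw, intervalIntegral.integral_const_mul,
    intervalIntegral.integral_sub]
  · have := int_cos 2 (by norm_num)
    push_cast at this
    rw [this]
    have := Real.pi_pos.ne'
    simp only [intervalIntegral.integral_const, smul_eq_mul]
    field_simp
    ring
  · simp
  · exact Continuous.intervalIntegrable (by fun_prop) _ _
  · exact Continuous.intervalIntegrable (by fun_prop) _ _
  · apply Continuous.intervalIntegrable
    apply Continuous.mul (by fun_prop)
    apply Continuous.add
    · apply Continuous.log (by fun_prop)
      intro θ; exact norm_ne_zero_iff.mpr (one_sub_ne ζ hζ θ)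
    · apply Continuous.log (by fun_prop)
      intro θ
      have := one_sub_ne ζ hζ (-θ)
      push_cast at this
      exact norm_ne_zero_iff.mpr this

lemma Psi_out (r : ℝ) (hr : 1 < |r|) :
    PsiStar ((r + r⁻¹) / Real.sqrt 2) = 1 / (2 * r ^ 2) + Real.log |r| - Real.log 2 / 2 := by
  have := jouk_int (r : ℂ) (by rw [Complex.norm_real]; exact hr)
  have e : ∀ t : ℝ, ‖jouk r - (t:ℂ)‖ = |(r + r⁻¹) / Real.sqrt 2 - t| := by
    intro t
    rw [← Real.norm_eq_abs, ← Complex.norm_real]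
    unfold jouk
    push_cast
    rfl
  simp_rw [e] at this
  unfold PsiStar
  rw [this, Complex.norm_real, Real.norm_eq_abs]
  congr 2
  have : ((r:ℂ)⁻¹ ^ 2 / 2) = ((1 / (2 * r^2) : ℝ) : ℂ) := by
    push_cast
    rw [inv_pow]
    field_simp
  rw [this, Complex.ofReal_re]

lemma Psi_le_aux (y r : ℝ) (hr : 1 < r) (hy : |y| ≤ Real.sqrt 2) :
    PsiStar y ≤ (2 * (Real.sqrt 2 * y / (r + r⁻¹)) ^ 2 - 1) / (2 * r ^ 2) + Real.log r
      - Real.log 2 / 2 := by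
  have hr0 : 0 < r := by linarith
  have h2 : (0:ℝ) < Real.sqrt 2 := by positivity
  have h22 : Real.sqrt 2 * Real.sqrt 2 = 2 := Real.mul_self_sqrt (by norm_num)
  have hrr : 2 ≤ r + r⁻¹ := by
    have : r + r⁻¹ - 2 = (r-1)^2 / r := by field_simp; ring
    have : 0 ≤ (r-1)^2 / r := by positivity
    linarith
  obtain ⟨hy1, hy2⟩ := abs_le.mp hy
  set c := Real.sqrt 2 * y / (r + r⁻¹) with hc
  have hc1 : -1 ≤ c := by
    rw [hc, le_div_iff₀ (by linarith)]; nlinarith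
  have hc2 : c ≤ 1 := by
    rw [hc, div_le_iff₀ (by linarith)]; nlinarith
  set φ := Real.arccos c
  have hφ : Real.cos φ = c := Real.cos_arccos hc1 hc2
  set ζ : ℂ := r * Complex.exp (φ * Complex.I) with hζdef
  have hnorm : ‖ζ‖ = r := by
    rw [hζdef, norm_mul, Complex.norm_exp_ofReal_mul_I, Complex.norm_real, mul_one,
      Real.norm_of_nonneg hr0.le]
  have hζ : 1 < ‖ζ‖ := by rw [hnorm]; exact hr
  have hinv : ζ⁻¹ = ((r⁻¹ : ℝ):ℂ) * Complex.exp ((-φ : ℝ) * Complex.I) := by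
    rw [hζdef, mul_inv, ← Complex.exp_neg]; push_cast; simp
  have hre : (jouk ζ).re = y := by
    unfold jouk
    rw [Complex.div_ofReal_re, Complex.add_re, hinv, hζdef, Complex.re_ofReal_mul,
      Complex.re_ofReal_mul, Complex.exp_ofReal_mul_I_re, Complex.exp_ofReal_mul_I_re, Real.cos_neg,
      hφ, hc]
    field_simp
  have hsq : (ζ⁻¹ ^ 2 / 2).re = (2 * c^2 - 1) / (2 * r^2) := by
    have : ζ⁻¹ ^ 2 / 2 = ((1 / (2 * r^2) : ℝ) : ℂ) * Complex.exp ((-(2 * φ) : ℝ) * Complex.I) := by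
      rw [hinv, mul_pow, ← Complex.exp_nat_mul]
      push_cast
      rw [inv_pow]
      field_simp
    rw [this, Complex.re_ofReal_mul, Complex.exp_ofReal_mul_I_re, Real.cos_neg, Real.cos_two_mul, hφ]
    ring
  have hJ := jouk_int ζ hζ
  rw [hsq, hnorm] at hJ
  rw [← hJ]
  unfold PsiStar
  rw [sigma_conv, sigma_conv]
  apply intervalIntegral.integral_mono_ae (by linarith)
  · apply IntervalIntegrable.continuousOn_mul _ (by fun_prop)
    simp_rw [Real.log_abs]
    have := (intervalIntegral.intervalIntegrable_log' (a := y + Real.sqrt 2) (b := y - Real.sqrt 2)).comp_sub_left y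
    simpa using this
  · apply ContinuousOn.intervalIntegrable
    rw [Set.uIcc_of_le (by linarith)]
    exact ContinuousOn.mul (by fun_prop) (jouk_cont ζ hζ)
  · have : ∀ᵐ t : ℝ, t ≠ y := by simp [ae_iff]
    filter_upwards [this] with t ht
    apply mul_le_mul_of_nonneg_left _ (by positivity)
    apply Real.log_le_log
    · exact abs_pos.mpr (sub_ne_zero.mpr ht.symm)
    · have := Complex.abs_re_le_norm (jouk ζ - (t:ℂ))
      rwa [Complex.sub_re, hre, Complex.ofReal_re] at this

lemma Psi_le (y : ℝ) (hy : |y| ≤ Real.sqrt 2) :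
    PsiStar y ≤ y ^ 2 / 2 - 1 / 2 - Real.log 2 / 2 := by
  have hlim : Filter.Tendsto (fun r : ℝ => (2 * (Real.sqrt 2 * y / (r + r⁻¹)) ^ 2 - 1) / (2 * r ^ 2)
      + Real.log r - Real.log 2 / 2) (nhdsWithin 1 (Set.Ioi 1))
      (nhds (y ^ 2 / 2 - 1 / 2 - Real.log 2 / 2)) := by
    have hc : ContinuousAt (fun r : ℝ => (2 * (Real.sqrt 2 * y / (r + r⁻¹)) ^ 2 - 1) / (2 * r ^ 2)
      + Real.log r - Real.log 2 / 2) 1 := by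
      fun_prop (disch := norm_num)
    have h := hc.tendsto.mono_left (nhdsWithin_le_nhds (s := Set.Ioi 1))
    convert h using 2
    have h22 : Real.sqrt 2 ^ 2 = 2 := Real.sq_sqrt (by norm_num)
    simp only [Real.log_one, inv_one, div_pow, mul_pow, h22]
    ring
  refine ge_of_tendsto hlim ?_
  filter_upwards [self_mem_nhdsWithin] with r hr
  exact Psi_le_aux y r hr hy

lemma log_lower (q : ℝ) (hq : 1 < q) : (q - 1) - (q - 1) ^ 2 / 2 < Real.log q := by
  have hm : StrictMonoOn (fun x : ℝ => Real.log x - ((x - 1) - (x - 1) ^ 2 / 2)) (Set.Ici 1) := by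
    apply strictMonoOn_of_hasDerivWithinAt_pos (f' := fun x => x⁻¹ - (1 - (x - 1))) (convex_Ici 1)
    · apply ContinuousOn.sub _ (by fun_prop)
      exact Real.continuousOn_log.mono (fun x hx => by
        have : (1:ℝ) ≤ x := hx
        simp; linarith)
    · intro x hx
      rw [interior_Ici] at hx
      have hx : 1 < x := hx
      have h1 := (hasDerivAt_id x).sub_const 1
      have := (Real.hasDerivAt_log (by linarith : x ≠ 0)).sub (h1.sub ((h1.pow 2).div_const 2))
      exact (this.congr_deriv (by simp)).hasDerivWithinAt
    · intro x hx
      rw [interior_Ici] at hx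
      have hx : 1 < x := hx
      have : x⁻¹ - (1 - (x - 1)) = (x-1)^2 / x := by field_simp; ring
      rw [this]
      have : 0 < x - 1 := by linarith
      positivity
  have := hm (Set.mem_Ici.mpr le_rfl) (Set.mem_Ici.mpr hq.le) hq
  simp at this
  linarith

lemma log_upper (p : ℝ) (hp : 1 < p) : Real.log p < (p - 1 / p) / 2 := by
  have hm : StrictMonoOn (fun x : ℝ => (x - x⁻¹) / 2 - Real.log x) (Set.Ici 1) := by
    apply strictMonoOn_of_hasDerivWithinAt_pos (f' := fun x => (1 + (x ^ 2)⁻¹) / 2 - x⁻¹) (convex_Ici 1)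
    · have : ∀ x ∈ Set.Ici (1:ℝ), x ≠ 0 := fun x hx => by
        have : (1:ℝ) ≤ x := hx
        linarith
      fun_prop (disch := assumption)
    · intro x hx
      rw [interior_Ici] at hx
      have hx : 1 < x := hx
      have h1 := (((hasDerivAt_id x).sub (hasDerivAt_inv (by linarith : x ≠ 0))).div_const 2).sub
        (Real.hasDerivAt_log (by linarith : x ≠ 0))
      exact (h1.congr_deriv (by ring)).hasDerivWithinAt
    · intro x hx
      rw [interior_Ici] at hx
      have hx : 1 < x := hx
      have : (1 + (x ^ 2)⁻¹) / 2 - x⁻¹ = (x-1)^2 / (2 * x^2) := by field_simp; ring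
      rw [this]
      have : 0 < x - 1 := by linarith
      positivity
  have := hm (Set.mem_Ici.mpr le_rfl) (Set.mem_Ici.mpr hp.le) hp
  simp at this
  rw [one_div]
  linarith

/-- one-variable inequality in the exterior parametrization -/
lemma ext_ineq (r s : ℝ) (hr : 1 ≤ r) (hs : 1 < s) (hne : r ≠ s) :
    1 / (2 * r ^ 2) + Real.log r - (s - r - r⁻¹) ^ 2 / 2 < Real.log s := by
  have hr0 : 0 < r := by linarith
  have hs0 : 0 < s := by linarith
  rcases lt_or_gt_of_ne hne with h | h
  · have := log_lower (s / r) (by rw [lt_div_iff₀ hr0]; linarith)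
    rw [Real.log_div hs0.ne' hr0.ne'] at this
    have e : 1 / (2 * r ^ 2) - (s - r - r⁻¹) ^ 2 / 2 = (s / r - 1) - (s / r - 1)^2 / 2
        - (s - r)^2 * (1 - (1/r)^2) / 2 := by
      field_simp; ring
    have : 0 ≤ (s - r)^2 * (1 - (1/r)^2) := by
      apply mul_nonneg (sq_nonneg _)
      have : 1 / r ≤ 1 := by rw [div_le_one hr0]; exact hr
      have : 0 < 1 / r := by positivity
      nlinarith
    linarith
  · have := log_upper (r / s) (by rw [lt_div_iff₀ hs0]; linarith)
    rw [Real.log_div hr0.ne' hs0.ne'] at this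
    have e : (r / s - 1 / (r / s)) / 2 = (s - r - r⁻¹) ^ 2 / 2 - 1 / (2 * r ^ 2)
       - ((r / s - 1)^3 / (2 * (r / s)) + (r - s)^2 * (1 - (1/s)^2) / 2) := by
      field_simp; ring
    have h1 : 0 ≤ (r - s)^2 * (1 - (1/s)^2) := by
      apply mul_nonneg (sq_nonneg _)
      have : 1 / s ≤ 1 := by rw [div_le_one hs0]; exact hs.le
      have : 0 < 1 / s := by positivity
      nlinarith
    have h2 : 0 ≤ (r / s - 1)^3 / (2 * (r / s)) := by
      have : 0 < r / s - 1 := by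
        rw [sub_pos, lt_div_iff₀ hs0]; linarith
      positivity
    linarith

lemma y_bound (s y : ℝ) (hs : 1 < s)
    (hy : y ≠ -(1 / Real.sqrt 2) * (s + 1 / s)) :
    PsiStar y - (y + s / Real.sqrt 2) ^ 2 < Real.log s - Real.log 2 / 2 := by
  have h2 : (0:ℝ) < Real.sqrt 2 := by positivity
  have h22 : Real.sqrt 2 ^ 2 = 2 := Real.sq_sqrt (by norm_num)
  have hs0 : 0 < s := by linarith
  rcases le_or_gt |y| (Real.sqrt 2) with h | h
  · have h1 := Psi_le y h
    have h3 := ext_ineq 1 s le_rfl hs hs.ne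
    obtain ⟨ha, hb⟩ := abs_le.mp h
    obtain ⟨m, hm⟩ : ∃ m, m = s / Real.sqrt 2 := ⟨_, rfl⟩
    have hsm : s = m * Real.sqrt 2 := by rw [hm]; field_simp
    rw [← hm]
    simp only [Real.log_one, inv_one] at h3
    have hm2 : Real.sqrt 2 ≤ 2 * m := by
      rw [hm, ← mul_div_assoc, le_div_iff₀ h2]; nlinarith
    have h4 : 0 ≤ (y + Real.sqrt 2) * (2 * m - (Real.sqrt 2 - y) / 2) :=
      mul_nonneg (by linarith) (by linarith)
    have h5 : (s - 1 - 1)^2 = 2 * m^2 - 4 * m * Real.sqrt 2 + 4 := by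
      rw [hsm]; linear_combination m^2 * h22
    nlinarith
  · have hpos : 0 < |y| := by linarith
    have hy2 : 2 < |y|^2 := by nlinarith
    obtain ⟨r, hr, hry⟩ : ∃ r : ℝ, 1 < r ∧ |y| = (r + r⁻¹) / Real.sqrt 2 := by
      have hd : 0 ≤ 2 * |y|^2 - 4 := by linarith
      have hD := Real.sq_sqrt hd
      have hD0 := Real.sqrt_nonneg (2 * |y|^2 - 4)
      have h2y : 2 < Real.sqrt 2 * |y| := by nlinarith
      refine ⟨(Real.sqrt 2 * |y| + Real.sqrt (2 * |y|^2 - 4)) / 2, by linarith, ?_⟩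
      have hrp : 0 < (Real.sqrt 2 * |y| + Real.sqrt (2 * |y|^2 - 4)) / 2 := by linarith
      have : ((Real.sqrt 2 * |y| + Real.sqrt (2 * |y|^2 - 4)) / 2)⁻¹
          = (Real.sqrt 2 * |y| - Real.sqrt (2 * |y|^2 - 4)) / 2 := by
        rw [inv_eq_one_div, div_eq_iff hrp.ne']
        linear_combination (-1/4 : ℝ) * |y|^2 * h22 + (1/4 : ℝ) * hD
      rw [this]
      field_simp
      ring
    have hr0 : 0 < r := by linarith
    have hri : 0 < r⁻¹ := by positivity
    rcases abs_cases y with ⟨he, _⟩ | ⟨he, _⟩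
    · have hyr : y = (r + r⁻¹) / Real.sqrt 2 := by rw [← he]; exact hry
      have hP := Psi_out r (by rw [abs_of_pos hr0]; exact hr)
      rw [abs_of_pos hr0] at hP
      rw [hyr, hP]
      have hle : 1 / (2 * r ^ 2) + Real.log r - (s - r - r⁻¹) ^ 2 / 2 ≤ Real.log s := by
        rcases eq_or_ne r s with hh | hh
        · rw [hh]
          apply le_of_eq
          field_simp
          ring
        · exact (ext_ineq r s hr.le hs hh).le
      have e : ((r + r⁻¹) / Real.sqrt 2 + s / Real.sqrt 2)^2 = (r + r⁻¹ + s)^2 / 2 := by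
        rw [← add_div, div_pow, h22]
      rw [e]
      nlinarith [mul_pos hs0 hr0, mul_pos hs0 hri]
    · have hyr : y = (-r + (-r)⁻¹) / Real.sqrt 2 := by
        rw [inv_neg, ← neg_add, neg_div, ← hry]; linarith
      have hP := Psi_out (-r) (by rw [abs_neg, abs_of_pos hr0]; exact hr)
      rw [abs_neg, abs_of_pos hr0, neg_sq] at hP
      have hne : r ≠ s := by
        rintro rfl
        apply hy
        rw [hyr, inv_neg]; ring
      have := ext_ineq r s hr.le hs hne
      rw [hyr, hP]
      have e : ((-r + (-r)⁻¹) / Real.sqrt 2 + s / Real.sqrt 2)^2 = (s - r - r⁻¹)^2 / 2 := by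
        rw [← add_div, div_pow, h22, inv_neg]; ring
      rw [e]
      linarith

lemma y_eq (s : ℝ) (hs : 1 < s) :
    PsiStar (-(1 / Real.sqrt 2) * (s + 1 / s)) -
      (-(1 / Real.sqrt 2) * (s + 1 / s) + s / Real.sqrt 2) ^ 2 = Real.log s - Real.log 2 / 2 := by
  have h2 : (0:ℝ) < Real.sqrt 2 := by positivity
  have h22 : Real.sqrt 2 ^ 2 = 2 := Real.sq_sqrt (by norm_num)
  have hs0 : 0 < s := by linarith
  have hP := Psi_out (-s) (by rw [abs_neg, abs_of_pos hs0]; exact hs)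
  rw [abs_neg, abs_of_pos hs0, neg_sq] at hP
  have e : -(1 / Real.sqrt 2) * (s + 1 / s) = (-s + (-s)⁻¹) / Real.sqrt 2 := by
    rw [inv_neg]; ring
  rw [e, hP]
  have e : ((-s + (-s)⁻¹) / Real.sqrt 2 + s / Real.sqrt 2)^2 = 1 / (2 * s^2) := by
    rw [← add_div, div_pow, h22, inv_neg]; field_simp; ring
  rw [e]; ring

lemma rho_bound (B' μ ρ : ℝ) (hB' : B' < 0) (hμ : 0 < μ) (hρ : 0 < ρ)
    (hne : ρ ≠ Real.sqrt (-2 * B') / μ) :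
    μ ^ 2 * ρ ^ 2 / (4 * B') + Real.log ρ <
      (1 / 2) * Real.log (-2 * B') - Real.log μ - 1 / 2 := by
  have hb : 0 < -2 * B' := by linarith
  have hx : 0 < μ ^ 2 * ρ ^ 2 / (-2 * B') := by positivity
  have hx1 : μ ^ 2 * ρ ^ 2 / (-2 * B') ≠ 1 := by
    intro h
    rw [div_eq_one_iff_eq hb.ne'] at h
    apply hne
    rw [← h, ← mul_pow, Real.sqrt_sq (by positivity)]
    field_simp
  have := Real.log_lt_sub_one_of_pos hx hx1
  rw [Real.log_div (by positivity) hb.ne', Real.log_mul (by positivity) (by positivity),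
    Real.log_pow, Real.log_pow] at this
  push_cast at this
  have e : μ ^ 2 * ρ ^ 2 / (4 * B') = - (μ ^ 2 * ρ ^ 2 / (-2 * B')) / 2 := by
    field_simp; ring
  rw [e]
  linarith

lemma rho_eq (B' μ : ℝ) (hB' : B' < 0) (hμ : 0 < μ) :
    μ ^ 2 * (Real.sqrt (-2 * B') / μ) ^ 2 / (4 * B') + Real.log (Real.sqrt (-2 * B') / μ) =
      (1 / 2) * Real.log (-2 * B') - Real.log μ - 1 / 2 := by
  have hb : 0 < -2 * B' := by linarith
  rw [Real.log_div (by positivity) hμ.ne', Real.log_sqrt hb.le, div_pow, Real.sq_sqrt hb.le]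
  have := hB'.ne
  field_simp
  ring

lemma decomp (B B' B'' μ ρ u y : ℝ)
    (hB : 0 < B) (hB'' : 0 < B'') (hCS : 0 < B * B'' - B' ^ 2) :
    psiSRC B B' B'' μ ρ u y =
      (PsiStar y - (y + (μ / Real.sqrt (4 * B'')) / Real.sqrt 2) ^ 2) +
      (μ ^ 2 * ρ ^ 2 / (4 * B') + Real.log ρ) -
      (B'' / (2 * (B * B'' - B' ^ 2))) * (u - μ * ρ ^ 2 / 2 +
        4 * B' * (y + (μ / Real.sqrt (4 * B'')) / Real.sqrt 2) /
          (Real.sqrt (4 * B'') * Real.sqrt 2)) ^ 2 := by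
  have e8 : Real.sqrt (8 * B'') = Real.sqrt (4 * B'') * Real.sqrt 2 := by
    rw [← Real.sqrt_mul (by positivity)]; congr 1; ring
  unfold psiSRC
  have hk : 0 < Real.sqrt (4 * B'') * Real.sqrt 2 := by positivity
  have hk2 : (Real.sqrt (4 * B'') * Real.sqrt 2) ^ 2 = 8 * B'' := by
    rw [← e8, Real.sq_sqrt (by positivity)]
  rw [e8, div_div]
  generalize Real.sqrt (4 * B'') * Real.sqrt 2 = k at hk hk2
  generalize u - μ * ρ ^ 2 / 2 = v
  have hBk : B'' = k ^ 2 / 8 := by linarith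
  obtain ⟨a, ha⟩ : ∃ a, a = y + μ / k := ⟨_, rfl⟩
  have hy : y + (μ + 2 * B' / B * v) / k = a + 2 * B' / B * v / k := by rw [ha]; ring
  rw [hy, ← ha]
  suffices h : v ^ 2 / (2 * B) + B * B'' / (B * B'' - B' ^ 2) * (a + 2 * B' / B * v / k) ^ 2 =
      a ^ 2 + B'' / (2 * (B * B'' - B' ^ 2)) * (v + 4 * B' * a / k) ^ 2 by
    linarith
  have hD := hCS.ne'
  have hD' : B * k ^ 2 - 8 * B' ^ 2 ≠ 0 := by
    intro h; apply hD; rw [hBk]; linarith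
  rw [hBk]
  have e1 : B * (k ^ 2 / 8) - B' ^ 2 = (B * k ^ 2 - 8 * B' ^ 2) / 8 := by ring
  rw [e1]
  field_simp
  ring

/-- The SRC complexity function attains its unique maximum on `(0,∞) × ℝ × ℝ`
at `(ρ*, u*, y*)`, with the stated maximum value. -/
theorem psiSRC_max (B B' B'' μ : ℝ)
    (hB : 0 < B) (hB' : B' < 0) (hB'' : 0 < B'')
    (hCS : 0 < B * B'' - B' ^ 2) (hμ : Real.sqrt (4 * B'') < μ) :
    (∀ ρ ∈ Set.Ioi (0 : ℝ), ∀ u y : ℝ,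
      psiSRC B B' B'' μ ρ u y ≤
        psiSRC B B' B'' μ (Real.sqrt (-2 * B') / μ) (B' / μ)
          (-(1 / Real.sqrt 2) * (μ / Real.sqrt (4 * B'') + Real.sqrt (4 * B'') / μ))) ∧
    (∀ ρ ∈ Set.Ioi (0 : ℝ), ∀ u y : ℝ,
      psiSRC B B' B'' μ ρ u y =
        psiSRC B B' B'' μ (Real.sqrt (-2 * B') / μ) (B' / μ)
          (-(1 / Real.sqrt 2) * (μ / Real.sqrt (4 * B'') + Real.sqrt (4 * B'') / μ)) →
        ρ = Real.sqrt (-2 * B') / μ ∧ u = B' / μ ∧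
          y = -(1 / Real.sqrt 2) * (μ / Real.sqrt (4 * B'') + Real.sqrt (4 * B'') / μ)) ∧
    psiSRC B B' B'' μ (Real.sqrt (-2 * B') / μ) (B' / μ)
        (-(1 / Real.sqrt 2) * (μ / Real.sqrt (4 * B'') + Real.sqrt (4 * B'') / μ)) =
      -Real.log (Real.sqrt (4 * B'')) + (1 / 2) * Real.log (-2 * B') - 1 / 2 -
        (1 / 2) * Real.log 2 := by
  have hk : 0 < Real.sqrt (4 * B'') := by positivity
  have hμ0 : 0 < μ := hk.trans hμ
  have hb : 0 < -2 * B' := by linarith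
  have h2 : (0:ℝ) < Real.sqrt 2 := by positivity
  have h22 : Real.sqrt 2 ^ 2 = 2 := Real.sq_sqrt (by norm_num)
  have hs : 1 < μ / Real.sqrt (4 * B'') := by rw [lt_div_iff₀ hk]; linarith
  have hinv : Real.sqrt (4 * B'') / μ = 1 / (μ / Real.sqrt (4 * B'')) := by
    rw [one_div_div]
  have hC : 0 < B'' / (2 * (B * B'' - B' ^ 2)) := by positivity
  have hlogs : Real.log (μ / Real.sqrt (4 * B'')) = Real.log μ - Real.log (Real.sqrt (4 * B'')) :=
    Real.log_div hμ0.ne' hk.ne'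
  -- the residual square at the critical point, in general form
  have hres : ∀ u : ℝ, u - μ * (Real.sqrt (-2 * B') / μ) ^ 2 / 2 +
        4 * B' * (-(1 / Real.sqrt 2) * (μ / Real.sqrt (4 * B'') + Real.sqrt (4 * B'') / μ)
          + (μ / Real.sqrt (4 * B'')) / Real.sqrt 2) /
          (Real.sqrt (4 * B'') * Real.sqrt 2) = u - B' / μ := by
    intro u
    rw [div_pow, Real.sq_sqrt hb.le]
    field_simp
    rw [h22]
    ring
  have hval : psiSRC B B' B'' μ (Real.sqrt (-2 * B') / μ) (B' / μ)
        (-(1 / Real.sqrt 2) * (μ / Real.sqrt (4 * B'') + Real.sqrt (4 * B'') / μ)) =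
      -Real.log (Real.sqrt (4 * B'')) + (1 / 2) * Real.log (-2 * B') - 1 / 2 -
        (1 / 2) * Real.log 2 := by
    rw [decomp B B' B'' μ _ _ _ hB hB'' hCS, hres, rho_eq B' μ hB' hμ0, hinv,
      y_eq _ hs, hlogs]
    ring
  have hyle : ∀ y, PsiStar y - (y + (μ / Real.sqrt (4 * B'')) / Real.sqrt 2) ^ 2 ≤
      Real.log (μ / Real.sqrt (4 * B'')) - Real.log 2 / 2 := by
    intro y
    by_cases h : y = -(1 / Real.sqrt 2) *
      (μ / Real.sqrt (4 * B'') + 1 / (μ / Real.sqrt (4 * B'')))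
    · rw [h]; exact (y_eq _ hs).le
    · exact (y_bound _ y hs h).le
  have hρle : ∀ ρ, 0 < ρ → μ ^ 2 * ρ ^ 2 / (4 * B') + Real.log ρ ≤
      (1 / 2) * Real.log (-2 * B') - Real.log μ - 1 / 2 := by
    intro ρ hρ
    by_cases h : ρ = Real.sqrt (-2 * B') / μ
    · rw [h]; exact (rho_eq B' μ hB' hμ0).le
    · exact (rho_bound B' μ ρ hB' hμ0 hρ h).le
  refine ⟨?_, ?_, hval⟩
  · intro ρ hρ u y
    rw [hval, decomp B B' B'' μ ρ u y hB hB'' hCS]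
    have h1 := hyle y
    have h3 := hρle ρ hρ
    rw [hlogs] at h1
    have h4 := mul_nonneg hC.le (sq_nonneg (u - μ * ρ ^ 2 / 2 +
        4 * B' * (y + (μ / Real.sqrt (4 * B'')) / Real.sqrt 2) /
          (Real.sqrt (4 * B'') * Real.sqrt 2)))
    linarith
  · intro ρ hρ u y heq
    rw [hval, decomp B B' B'' μ ρ u y hB hB'' hCS] at heq
    have h1 := hyle y
    have h3 := hρle ρ hρ
    have h4 := mul_nonneg hC.le (sq_nonneg (u - μ * ρ ^ 2 / 2 +
        4 * B' * (y + (μ / Real.sqrt (4 * B'')) / Real.sqrt 2) /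
          (Real.sqrt (4 * B'') * Real.sqrt 2)))
    have hyy : y = -(1 / Real.sqrt 2) *
        (μ / Real.sqrt (4 * B'') + Real.sqrt (4 * B'') / μ) := by
      rw [hinv]
      by_contra h
      have := y_bound _ y hs h
      rw [hlogs] at this
      linarith
    have hρρ : ρ = Real.sqrt (-2 * B') / μ := by
      by_contra h
      have := rho_bound B' μ ρ hB' hμ0 hρ h
      rw [hlogs] at h1
      linarith
    refine ⟨hρρ, ?_, hyy⟩
    rw [hlogs] at h1
    have h5 : (B'' / (2 * (B * B'' - B' ^ 2))) * (u - μ * ρ ^ 2 / 2 +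
        4 * B' * (y + (μ / Real.sqrt (4 * B'')) / Real.sqrt 2) /
          (Real.sqrt (4 * B'') * Real.sqrt 2)) ^ 2 = 0 := by
      linarith
    rw [hρρ, hyy, hres] at h5
    have h6 := (mul_eq_zero.mp h5).resolve_left hC.ne'
    have h7 := pow_eq_zero_iff (two_ne_zero) |>.mp h6
    linarith
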